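/- (Trudinger-type exponential integrability for compactly supported functions) Let $\Omega\subseteq\mathbb{R}^n$, $n\ge2$, be a bounded domain and $\delta_1,\delta_2\in(0,n]$. Then there exist positive constants $a,b$ such that $\int_\Omega \exp\big(a\,|u(x)|^{n/(n-1)}\big)\,d\mathcal{H}^{\delta_1}_\infty \le b$ for all $u\in C^1_0(\Omega)$ with $\int_\Omega |\nabla u(y)|^{\delta_2}\,d\mathcal{H}^{\delta_2}_\infty \le 1$. -/

import Mathlib

open MeasureTheory Metric Set ENNReal

/-- δ-dimensional Hausdorff content via countable ball coverings. -/
noncomputable def hc (n : ℕ) (δ : ℝ) (E : Set (EuclideanSpace ℝ (Fin n))) : ℝ≥0∞ :=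
  ⨅ (c : ℕ → EuclideanSpace ℝ (Fin n)) (r : ℕ → ℝ) (_ : ∀ i, 0 < r i)
    (_ : E ⊆ ⋃ i, ball (c i) (r i)), ∑' i, ENNReal.ofReal (r i ^ δ)

/-- Choquet integral of a nonnegative function over Ω with respect to `hc n δ`. -/
noncomputable def choquet (n : ℕ) (δ : ℝ) (Ω : Set (EuclideanSpace ℝ (Fin n)))
    (f : EuclideanSpace ℝ (Fin n) → ℝ≥0∞) : ℝ≥0∞ :=
  ∫⁻ t in Ioi (0:ℝ), hc n δ {x | x ∈ Ω ∧ ENNReal.ofReal t < f x}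

/-!
Up to a dimensional constant, `|u|` is bounded by the Riesz potential of `|∇u|`. Call `x` a point
of concentration at scale `r` if `∫ |∇u| ^ n` over some ball `B(x, s)` with `s ≤ r` exceeds
`(s / r) ^ δ₁` times its total value. At all other points, summing Hölder's inequality over
dyadic annuli within distance `r`, and applying it once between `r` and `D = r * exp L`, bounds the
potential by a multiple of `‖∇u‖ₙ * L ^ ((n - 1) / n)`. The points of concentration have
`δ₁`-content at most `(6 * r) ^ δ₁` by Vitali's covering lemma. Since `r = D * exp (-L)`, the
content of `{|u| ^ (n / (n - 1)) > s}` decays exponentially in `s`, which is what the Choquet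
integral of `exp (a * |u| ^ (n / (n - 1)))` needs.

The Choquet hypothesis bounds `∫ |∇u| ^ n` because Lebesgue measure is at most a multiple of the
content to the power `n / δ₂ ≥ 1`.
-/

section Polar

local notation "dim" => Module.finrank ℝ

variable {E : Type*} [NormedAddCommGroup E]

theorem closedBall_diff_singleton_subset_iUnion_dyadic_annulus (r : ℝ) :
    closedBall (0 : E) r \ {0} ⊆
      ⋃ k : ℕ, closedBall 0 (r * 2⁻¹ ^ k) \ ball 0 (r * 2⁻¹ ^ k / 2) := by
  rintro y ⟨hyr, hy⟩
  rw [mem_closedBall_zero_iff] at hyr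
  have hy0 : 0 < ‖y‖ := norm_pos_iff.2 hy
  have hr : 0 < r := hy0.trans_le hyr
  obtain ⟨k, hk_lt, hk_le⟩ := exists_nat_pow_near_of_lt_one (div_pos hy0 hr)
    ((div_le_one hr).2 hyr) (by norm_num : (0 : ℝ) < 2⁻¹) (by norm_num)
  rw [lt_div_iff₀' hr] at hk_lt
  rw [div_le_iff₀' hr] at hk_le
  refine mem_iUnion.2 ⟨k, by simpa using hk_le, ?_⟩
  rw [mem_ball_zero_iff, not_lt]
  exact (by ring : r * 2⁻¹ ^ k / 2 = r * 2⁻¹ ^ (k + 1)).trans_le hk_lt.le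

variable [NormedSpace ℝ E]

theorem enorm_smul_coe_sphere {s : ℝ} (hs : 0 ≤ s) (ω : sphere (0 : E) 1) :
    ‖s • (ω : E)‖ₑ = ENNReal.ofReal s := by
  rw [← ofReal_norm, norm_smul, norm_eq_of_mem_sphere, mul_one, Real.norm_of_nonneg hs]

theorem lintegral_Icc_ofReal_inv {s t : ℝ} (hs : 0 < s) (hst : s ≤ t) :
    ∫⁻ r in Icc s t, ENNReal.ofReal r⁻¹ = ENNReal.ofReal (Real.log (t / s)) := by
  have hpos : ∀ r ∈ Icc s t, 0 < r := fun r hr => hs.trans_le hr.1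
  have hint : IntegrableOn (fun r : ℝ => r⁻¹) (Icc s t) :=
    (continuousOn_id.inv₀ fun r hr => (hpos r hr).ne').integrableOn_Icc
  rw [← integral_inv_of_pos hs (hs.trans_le hst), intervalIntegral.integral_of_le hst,
    ← integral_Icc_eq_integral_Ioc, ofReal_integral_eq_lintegral_ofReal hint]
  filter_upwards [ae_restrict_mem measurableSet_Icc] with r hr
  exact inv_nonneg.2 (hpos r hr).le

theorem enorm_le_lintegral_ray_enorm_fderiv {F : Type*} [NormedAddCommGroup F] [NormedSpace ℝ F]
    {u : E → F} (hu : ContDiff ℝ 1 u) (hsupp : HasCompactSupport u) (x : E) {v : E} (hv : v ≠ 0) :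
    ‖u x‖ₑ ≤ ∫⁻ s in Ioi (0 : ℝ), ‖fderiv ℝ u (x + s • v)‖ₑ * ‖v‖ₑ := by
  let ray : ℝ → E := fun s => x + s • -v
  have hray (s : ℝ) : HasDerivAt ray (-v) s := by
    simpa [ray] using ((hasDerivAt_id s).smul_const (-v)).const_add x
  have hemb : Topology.IsClosedEmbedding ray :=
    (Homeomorph.addLeft x).isClosedEmbedding.comp (isClosedEmbedding_smul_left (neg_ne_zero.2 hv))
  have hderiv (s : ℝ) : ‖deriv (u ∘ ray) s‖ₑ ≤ ‖fderiv ℝ u (ray s)‖ₑ * ‖v‖ₑ := by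
    rw [((hu.differentiable one_ne_zero _).hasFDerivAt.comp_hasDerivAt s (hray s)).deriv,
      ← enorm_neg v]
    exact ContinuousLinearMap.le_opENorm _ _
  calc ‖u x‖ₑ = ‖(u ∘ ray) 0‖ₑ := by simp [ray]
    _ ≤ ∫⁻ s in Iic (0 : ℝ), ‖deriv (u ∘ ray) s‖ₑ :=
      (hsupp.comp_isClosedEmbedding hemb).enorm_le_lintegral_Ici_deriv
        (hu.comp (by fun_prop)) 0
    _ ≤ ∫⁻ s in Iic (0 : ℝ), ‖fderiv ℝ u (ray s)‖ₑ * ‖v‖ₑ := lintegral_mono hderiv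
    _ = ∫⁻ s in Ici (0 : ℝ), ‖fderiv ℝ u (x + s • v)‖ₑ * ‖v‖ₑ := by
      simpa [ray] using
        (Measure.measurePreserving_neg (volume : Measure ℝ)).setLIntegral_comp_preimage_emb
          (MeasurableEquiv.neg ℝ).measurableEmbedding
          (fun s => ‖fderiv ℝ u (x + s • v)‖ₑ * ‖v‖ₑ) (Ici 0)
    _ = _ := by rw [restrict_Ioi_eq_restrict_Ici]

/-- The Riesz kernel of order one on a normed space of dimension `d`, namely `‖y‖ ^ (1 - d)`. -/
noncomputable def rieszKernel (y : E) : ℝ≥0∞ := ‖y‖ₑ ^ (1 - dim E : ℝ)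

variable [MeasurableSpace E]

theorem measurable_rieszKernel [BorelSpace E] : Measurable (rieszKernel : E → ℝ≥0∞) :=
  measurable_enorm.pow_const _

variable (μ : Measure E)

/-- The Riesz potential of order one of `f` at `x`, without normalising constant. The integral is
written over displacements `y` from `x`, so that the singularity of the kernel sits at `0`. -/
noncomputable def rieszPotential (f : E → ℝ≥0∞) (x : E) : ℝ≥0∞ :=
  ∫⁻ y, f (x + y) * rieszKernel y ∂μ

variable [FiniteDimensional ℝ E] [BorelSpace E] [μ.IsAddHaarMeasure]

theorem lintegral_eq_lintegral_toSphere_lintegral_Ioi [Nontrivial E] {f : E → ℝ≥0∞}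
    (hf : Measurable f) :
    ∫⁻ y, f y ∂μ =
      ∫⁻ ω, (∫⁻ s in Ioi (0 : ℝ), ENNReal.ofReal (s ^ (dim E - 1)) * f (s • (ω : E)))
        ∂μ.toSphere := by
  have hpolar := μ.measurePreserving_homeomorphUnitSphereProd.symm
    (homeomorphUnitSphereProd E).toMeasurableEquiv
  have hsmul : Measurable fun p : sphere (0 : E) 1 × Ioi (0 : ℝ) => (p.2 : ℝ) • (p.1 : E) := by
    fun_prop
  calc ∫⁻ y, f y ∂μ = ∫⁻ y : ({0}ᶜ : Set E), f y ∂(μ.comap (↑)) := by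
        rw [lintegral_subtype_comap (measurableSet_singleton _).compl, restrict_compl_singleton]
    _ = ∫⁻ p, f ((p.2 : ℝ) • (p.1 : E)) ∂(μ.toSphere.prod (.volumeIoiPow (dim E - 1))) :=
        (hpolar.lintegral_comp (hf.comp measurable_subtype_coe)).symm
    _ = ∫⁻ ω, ∫⁻ s : Ioi (0 : ℝ), f ((s : ℝ) • (ω : E)) ∂(.volumeIoiPow (dim E - 1))
          ∂μ.toSphere := lintegral_prod _ (hf.comp hsmul).aemeasurable
    _ = _ := by
        refine lintegral_congr fun ω => ?_
        have hray : Measurable fun s : Ioi (0 : ℝ) => f ((s : ℝ) • (ω : E)) :=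
          hf.comp (g := f) (by fun_prop : Measurable fun s : Ioi (0 : ℝ) => (s : ℝ) • (ω : E))
        rw [Measure.volumeIoiPow, lintegral_withDensity_eq_lintegral_mul _ (by fun_prop) hray,
          ← lintegral_subtype_comap measurableSet_Ioi]
        rfl

theorem lintegral_mul_enorm_rpow_sub_finrank [Nontrivial E] {f : E → ℝ≥0∞}
    (hf : Measurable f) (a : ℝ) :
    ∫⁻ y, f y * ‖y‖ₑ ^ (a - dim E : ℝ) ∂μ =
      ∫⁻ ω, (∫⁻ s in Ioi (0 : ℝ), f (s • (ω : E)) * ENNReal.ofReal s ^ (a - 1)) ∂μ.toSphere := by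
  have hF : Measurable fun y => f y * ‖y‖ₑ ^ (a - dim E : ℝ) :=
    hf.mul (measurable_enorm.pow_const _)
  rw [lintegral_eq_lintegral_toSphere_lintegral_Ioi μ hF]
  refine lintegral_congr fun ω => setLIntegral_congr_fun measurableSet_Ioi fun s hs => ?_
  have hs0 : (0 : ℝ) ≤ s := le_of_lt hs
  have hs_ne : ENNReal.ofReal s ≠ 0 := by simpa using hs
  have hdim : ((dim E - 1 : ℕ) : ℝ) = dim E - 1 := Nat.cast_pred Module.finrank_pos
  rw [enorm_smul_coe_sphere hs0, ENNReal.ofReal_pow hs0, ← ENNReal.rpow_natCast, mul_left_comm,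
    ← ENNReal.rpow_add _ _ hs_ne ENNReal.ofReal_ne_top, hdim]
  ring_nf

theorem setLIntegral_annulus_enorm_rpow_neg_finrank [Nontrivial E] {s t : ℝ} (hs : 0 < s)
    (hst : s ≤ t) :
    ∫⁻ y in closedBall 0 t \ ball 0 s, ‖y‖ₑ ^ (-dim E : ℝ) ∂μ =
      ENNReal.ofReal (Real.log (t / s)) * μ.toSphere univ := by
  have hA : MeasurableSet (closedBall (0 : E) t \ ball 0 s) :=
    measurableSet_closedBall.diff measurableSet_ball
  have hsub : Icc s t ⊆ Ioi 0 := fun r hr => hs.trans_le hr.1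
  have hradial (ω : sphere (0 : E) 1) {r : ℝ} (hr : 0 < r) :
      (closedBall (0 : E) t \ ball 0 s).indicator 1 (r • (ω : E)) * ENNReal.ofReal r ^ (0 - 1 : ℝ) =
        (Icc s t).indicator (fun r => ENNReal.ofReal r⁻¹) r := by
    simp [indicator, norm_smul, abs_of_pos hr, ENNReal.rpow_neg_one,
      ENNReal.ofReal_inv_of_pos hr, and_comm]
  calc ∫⁻ y in closedBall 0 t \ ball 0 s, ‖y‖ₑ ^ (-dim E : ℝ) ∂μ
      = ∫⁻ y, (closedBall 0 t \ ball 0 s).indicator 1 y * ‖y‖ₑ ^ (0 - dim E : ℝ) ∂μ := by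
        rw [← lintegral_indicator hA]
        simp [indicator]
    _ = ∫⁻ _, (∫⁻ r in Ioi (0 : ℝ), (Icc s t).indicator (fun r => ENNReal.ofReal r⁻¹) r)
          ∂μ.toSphere := by
        rw [lintegral_mul_enorm_rpow_sub_finrank μ (measurable_one.indicator hA)]
        exact lintegral_congr fun ω => setLIntegral_congr_fun measurableSet_Ioi fun r => hradial ω
    _ = ENNReal.ofReal (Real.log (t / s)) * μ.toSphere univ := by
        rw [lintegral_const, setLIntegral_indicator measurableSet_Icc,
          inter_eq_left.2 hsub, lintegral_Icc_ofReal_inv hs hst]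

theorem enorm_mul_toSphere_univ_le_rieszPotential [Nontrivial E] {F : Type*}
    [NormedAddCommGroup F] [NormedSpace ℝ F] {u : E → F} (hu : ContDiff ℝ 1 u)
    (hsupp : HasCompactSupport u) (x : E) :
    ‖u x‖ₑ * μ.toSphere univ ≤ rieszPotential μ (fun y => ‖fderiv ℝ u y‖ₑ) x := by
  have hcont : Continuous (fderiv ℝ u) := hu.continuous_fderiv one_ne_zero
  have hmeas : Measurable fun y => ‖fderiv ℝ u (x + y)‖ₑ :=
    (hcont.comp (continuous_const_add x)).enorm.measurable
  calc ‖u x‖ₑ * μ.toSphere univ = ∫⁻ _, ‖u x‖ₑ ∂μ.toSphere := (lintegral_const _).symm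
    _ ≤ ∫⁻ ω, (∫⁻ s in Ioi (0 : ℝ), ‖fderiv ℝ u (x + s • (ω : E))‖ₑ *
          ENNReal.ofReal s ^ (1 - 1 : ℝ)) ∂μ.toSphere := lintegral_mono fun ω => by
        have hω : ‖(ω : E)‖ₑ = 1 := by simpa using enorm_smul_coe_sphere zero_le_one ω
        simpa [hω] using
          enorm_le_lintegral_ray_enorm_fderiv hu hsupp x (ne_zero_of_mem_unit_sphere ω)
    _ = _ := (lintegral_mul_enorm_rpow_sub_finrank μ hmeas 1).symm

theorem setLIntegral_annulus_mul_rieszKernel_le (hE : 1 < dim E) {f : E → ℝ≥0∞}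
    (hf : Measurable f) {s t : ℝ} (hs : 0 < s) (hst : s ≤ t) :
    ∫⁻ y in closedBall 0 t \ ball 0 s, f y * rieszKernel y ∂μ ≤
      (∫⁻ y in closedBall 0 t, f y ^ (dim E : ℝ) ∂μ) ^ (1 / dim E : ℝ) *
        (ENNReal.ofReal (Real.log (t / s)) * μ.toSphere univ) ^ ((dim E - 1) / dim E : ℝ) := by
  have := Module.nontrivial_of_finrank_pos (zero_lt_one.trans hE)
  have hE' : (1 : ℝ) < dim E := by exact_mod_cast hE
  have hexp : (1 - dim E : ℝ) * (dim E / (dim E - 1)) = -dim E := by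
    have : (dim E : ℝ) - 1 ≠ 0 := by linarith
    field_simp
    ring
  calc ∫⁻ y in closedBall 0 t \ ball 0 s, f y * rieszKernel y ∂μ
      ≤ (∫⁻ y in closedBall 0 t \ ball 0 s, f y ^ (dim E : ℝ) ∂μ) ^ (1 / dim E : ℝ) *
          (∫⁻ y in closedBall 0 t \ ball 0 s, rieszKernel y ^ (dim E / (dim E - 1) : ℝ) ∂μ) ^
            (1 / (dim E / (dim E - 1)) : ℝ) :=
        ENNReal.lintegral_mul_le_Lp_mul_Lq _ (Real.HolderConjugate.conjExponent hE')
          hf.aemeasurable measurable_rieszKernel.aemeasurable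
    _ ≤ _ := by
        simp only [rieszKernel, ← ENNReal.rpow_mul]
        rw [hexp, setLIntegral_annulus_enorm_rpow_neg_finrank μ hs hst, one_div_div]
        gcongr
        exact sdiff_subset

theorem setLIntegral_dyadic_annulus_mul_rieszKernel_le (hE : 1 < dim E) {f : E → ℝ≥0∞}
    (hf : Measurable f) {t : ℝ} (ht : 0 < t) :
    ∫⁻ y in closedBall 0 t \ ball 0 (t / 2), f y * rieszKernel y ∂μ ≤
      (∫⁻ y in closedBall 0 t, f y ^ (dim E : ℝ) ∂μ) ^ (1 / dim E : ℝ) *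
        μ.toSphere univ ^ ((dim E - 1) / dim E : ℝ) := by
  have hE' : (1 : ℝ) < dim E := by exact_mod_cast hE
  have hlog : Real.log (t / (t / 2)) ≤ 1 := by
    rw [div_div_cancel₀ ht.ne']
    linarith [Real.log_two_lt_d9]
  refine (setLIntegral_annulus_mul_rieszKernel_le μ hE hf (half_pos ht) (half_le_self ht.le)).trans
    (mul_le_mul_right (ENNReal.rpow_le_rpow ?_ ?_) _)
  · exact mul_le_of_le_one_left' (ENNReal.ofReal_le_one.2 hlog)
  · exact div_nonneg (by linarith) (by linarith)

theorem setLIntegral_closedBall_mul_rieszKernel_le_of_forall_le (hE : 1 < dim E) {f : E → ℝ≥0∞}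
    (hf : Measurable f) {δ r : ℝ} {M : ℝ≥0∞} (hr : 0 < r)
    (hM : ∀ s, 0 < s → s ≤ r →
      ∫⁻ y in closedBall 0 s, f y ^ (dim E : ℝ) ∂μ ≤ ENNReal.ofReal (s / r) ^ δ * M) :
    ∫⁻ y in closedBall 0 r, f y * rieszKernel y ∂μ ≤
      μ.toSphere univ ^ ((dim E - 1) / dim E : ℝ) * (1 - 2⁻¹ ^ (δ / dim E : ℝ))⁻¹ *
        M ^ (1 / dim E : ℝ) := by
  have := Module.nontrivial_of_finrank_pos (zero_lt_one.trans hE)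
  set S := μ.toSphere univ ^ ((dim E - 1) / dim E : ℝ)
  set q : ℝ≥0∞ := 2⁻¹ ^ (δ / dim E : ℝ)
  set A := fun k : ℕ => closedBall (0 : E) (r * 2⁻¹ ^ k) \ ball 0 (r * 2⁻¹ ^ k / 2)
  have hmass (k : ℕ) : (∫⁻ y in closedBall 0 (r * 2⁻¹ ^ k), f y ^ (dim E : ℝ) ∂μ) ^
      (1 / dim E : ℝ) ≤ q ^ k * M ^ (1 / dim E : ℝ) := by
    have hk := hM (r * 2⁻¹ ^ k) (by positivity)
      (mul_le_of_le_one_right hr.le (pow_le_one₀ (by norm_num) (by norm_num)))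
    refine (ENNReal.rpow_le_rpow hk (by positivity)).trans_eq ?_
    rw [mul_div_cancel_left₀ _ hr.ne', ENNReal.ofReal_pow (by norm_num),
      ENNReal.ofReal_inv_of_pos two_pos, ENNReal.ofReal_ofNat,
      ENNReal.mul_rpow_of_nonneg _ _ (by positivity)]
    simp only [q, ← ENNReal.rpow_natCast, ← ENNReal.rpow_mul]
    ring_nf
  calc ∫⁻ y in closedBall 0 r, f y * rieszKernel y ∂μ
      = ∫⁻ y in closedBall 0 r \ {0}, f y * rieszKernel y ∂μ := by
        rw [Measure.restrict_congr_set (sdiff_null_ae_eq_self (measure_singleton 0))]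
    _ ≤ ∫⁻ y in ⋃ k, A k, f y * rieszKernel y ∂μ :=
        lintegral_mono_set (closedBall_diff_singleton_subset_iUnion_dyadic_annulus r)
    _ ≤ ∑' k, ∫⁻ y in A k, f y * rieszKernel y ∂μ := lintegral_iUnion_le _ _
    _ ≤ ∑' k : ℕ, q ^ k * M ^ (1 / dim E : ℝ) * S := ENNReal.tsum_le_tsum fun k =>
        (setLIntegral_dyadic_annulus_mul_rieszKernel_le μ hE hf (by positivity)).trans
          (mul_le_mul_left (hmass k) S)
    _ = S * (1 - q)⁻¹ * M ^ (1 / dim E : ℝ) := by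
        rw [ENNReal.tsum_mul_right, ENNReal.tsum_mul_right, ENNReal.tsum_geometric]
        ring

/-- The constant in the logarithmic bound for Riesz potentials: the summand `1` accounts for the
region away from the singularity, the other one for the geometric series over dyadic annuli. -/
noncomputable def rieszConst (δ : ℝ) : ℝ≥0∞ :=
  μ.toSphere univ ^ ((dim E - 1) / dim E : ℝ) * (1 + (1 - 2⁻¹ ^ (δ / dim E : ℝ))⁻¹)

theorem rieszConst_ne_top (hE : 1 < dim E) {δ : ℝ} (hδ : 0 < δ) : rieszConst μ δ ≠ ∞ := by
  have := Module.nontrivial_of_finrank_pos (zero_lt_one.trans hE)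
  have hE' : (1 : ℝ) < dim E := by exact_mod_cast hE
  have hq : (2⁻¹ : ℝ≥0∞) ^ (δ / dim E : ℝ) < 1 :=
    ENNReal.rpow_lt_one (by norm_num) (div_pos hδ (by linarith))
  refine ENNReal.mul_ne_top (ENNReal.rpow_ne_top_of_nonneg ?_ (measure_ne_top _ _))
    (ENNReal.add_ne_top.2 ⟨one_ne_top, ENNReal.inv_ne_top.2 (tsub_pos_of_lt hq).ne'⟩)
  exact div_nonneg (by linarith) (by linarith)

theorem setLIntegral_closedBall_mul_rieszKernel_le (hE : 1 < dim E) {f : E → ℝ≥0∞}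
    (hf : Measurable f) {δ r L : ℝ} {M : ℝ≥0∞} (hr : 0 < r) (hL : 1 ≤ L)
    (hM : ∫⁻ y in closedBall 0 (r * Real.exp L), f y ^ (dim E : ℝ) ∂μ ≤ M)
    (hM_small : ∀ s, 0 < s → s ≤ r →
      ∫⁻ y in closedBall 0 s, f y ^ (dim E : ℝ) ∂μ ≤ ENNReal.ofReal (s / r) ^ δ * M) :
    ∫⁻ y in closedBall 0 (r * Real.exp L), f y * rieszKernel y ∂μ ≤
      rieszConst μ δ * M ^ (1 / dim E : ℝ) * ENNReal.ofReal L ^ ((dim E - 1) / dim E : ℝ) := by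
  have hE' : (1 : ℝ) < dim E := by exact_mod_cast hE
  have hexp : (0 : ℝ) ≤ (dim E - 1) / dim E := div_nonneg (by linarith) (by linarith)
  set S := μ.toSphere univ ^ ((dim E - 1) / dim E : ℝ)
  set R := r * Real.exp L
  have hrR : r ≤ R := le_mul_of_one_le_right hr.le (Real.one_le_exp (by linarith))
  have hlog : Real.log (R / r) = L := by rw [mul_div_cancel_left₀ _ hr.ne', Real.log_exp]
  have hL1 : 1 ≤ ENNReal.ofReal L ^ ((dim E - 1) / dim E : ℝ) :=
    ENNReal.one_le_rpow (ENNReal.one_le_ofReal.2 hL) (div_pos (by linarith) (by linarith))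
  have hfar : ∫⁻ y in closedBall 0 R \ ball 0 r, f y * rieszKernel y ∂μ ≤
      M ^ (1 / dim E : ℝ) * (ENNReal.ofReal L ^ ((dim E - 1) / dim E : ℝ) * S) := by
    rw [← ENNReal.mul_rpow_of_nonneg _ _ hexp, ← hlog]
    exact (setLIntegral_annulus_mul_rieszKernel_le μ hE hf hr hrR).trans
      (mul_le_mul_left (ENNReal.rpow_le_rpow hM (by positivity)) _)
  calc ∫⁻ y in closedBall 0 R, f y * rieszKernel y ∂μ
      ≤ ∫⁻ y in closedBall 0 r ∪ closedBall 0 R \ ball 0 r, f y * rieszKernel y ∂μ :=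
        lintegral_mono_set fun y hy => (em (y ∈ ball 0 r)).imp (ball_subset_closedBall ·) (⟨hy, ·⟩)
    _ ≤ _ := lintegral_union_le _ _ _
    _ ≤ S * (1 - 2⁻¹ ^ (δ / dim E : ℝ))⁻¹ * M ^ (1 / dim E : ℝ) *
          ENNReal.ofReal L ^ ((dim E - 1) / dim E : ℝ) +
        M ^ (1 / dim E : ℝ) * (ENNReal.ofReal L ^ ((dim E - 1) / dim E : ℝ) * S) :=
        add_le_add ((setLIntegral_closedBall_mul_rieszKernel_le_of_forall_le μ hE hf hr
          hM_small).trans (le_mul_of_one_le_right' hL1)) hfar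
    _ = _ := by
        rw [rieszConst]
        ring

theorem rieszPotential_le_of_forall_setLIntegral_closedBall_le (hE : 1 < dim E) {f : E → ℝ≥0∞}
    (hf : Measurable f) {δ r L : ℝ} {x : E} (hr : 0 < r) (hL : 1 ≤ L)
    (hsupp : Function.support f ⊆ closedBall x (r * Real.exp L))
    (hsmall : ∀ s, 0 < s → s ≤ r → ∫⁻ y in closedBall x s, f y ^ (dim E : ℝ) ∂μ ≤
      ENNReal.ofReal (s / r) ^ δ * ∫⁻ y, f y ^ (dim E : ℝ) ∂μ) :
    rieszPotential μ f x ≤ rieszConst μ δ * (∫⁻ y, f y ^ (dim E : ℝ) ∂μ) ^ (1 / dim E : ℝ) *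
      ENNReal.ofReal L ^ ((dim E - 1) / dim E : ℝ) := by
  have htranslate (s : ℝ) : ∫⁻ y in closedBall 0 s, f (x + y) ^ (dim E : ℝ) ∂μ =
      ∫⁻ y in closedBall x s, f y ^ (dim E : ℝ) ∂μ := by
    simpa using (measurePreserving_add_left μ x).setLIntegral_comp_preimage_emb
      (MeasurableEquiv.addLeft x).measurableEmbedding (fun y => f y ^ (dim E : ℝ)) (closedBall x s)
  have hball : rieszPotential μ f x =
      ∫⁻ y in closedBall 0 (r * Real.exp L), f (x + y) * rieszKernel y ∂μ := by
    refine (setLIntegral_eq_of_support_subset ?_).symm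
    intro y hy
    simpa using hsupp (left_ne_zero_of_mul hy)
  rw [hball]
  refine setLIntegral_closedBall_mul_rieszKernel_le μ hE (hf.comp (measurable_const_add x)) hr hL
    ((htranslate _).trans_le (setLIntegral_le_lintegral _ _)) fun s hs hsr => ?_
  exact (htranslate s).trans_le (hsmall s hs hsr)

end Polar

/-- Euclidean space of dimension `n`. -/
abbrev Euc (n : ℕ) := EuclideanSpace ℝ (Fin n)

section HausdorffContent

variable {n : ℕ} {δ : ℝ}

theorem hc_mono {A B : Set (Euc n)} (h : A ⊆ B) : hc n δ A ≤ hc n δ B :=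
  iInf_mono fun _ => iInf_mono fun _ => iInf_mono fun _ =>
    le_iInf fun hB => iInf_le_of_le (h.trans hB) le_rfl

theorem hc_le_tsum (hδ : 0 < δ) {ι : Type*} [Countable ι] {A : Set (Euc n)} (c : ι → Euc n)
    (r : ι → ℝ) (hr : ∀ i, 0 < r i) (hA : A ⊆ ⋃ i, ball (c i) (r i)) :
    hc n δ A ≤ ∑' i, ENNReal.ofReal (r i ^ δ) := by
  refine ENNReal.le_of_forall_pos_le_add fun ε hε _ => ?_
  -- `hc` only allows sequences of balls, so the cover is padded with balls of total weight `< ε`.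
  obtain ⟨ρ, hρ, hsum⟩ := ENNReal.exists_pos_sum_of_countable (ENNReal.coe_ne_zero.2 hε.ne') ℕ
  obtain ⟨e⟩ : Nonempty (ℕ ≃ ι ⊕ ℕ) := nonempty_equiv_of_countable
  let center : ι ⊕ ℕ → Euc n := Sum.elim c fun _ => 0
  let radius : ι ⊕ ℕ → ℝ := Sum.elim r fun i => (ρ i : ℝ) ^ δ⁻¹
  have hradius : ∀ j, 0 < radius j :=
    Sum.forall.2 ⟨hr, fun i => Real.rpow_pos_of_pos (hρ i) _⟩
  have hcover : A ⊆ ⋃ i, ball (center (e i)) (radius (e i)) := by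
    rw [e.surjective.iUnion_comp fun j => ball (center j) (radius j), iUnion_sum]
    exact hA.trans subset_union_left
  calc hc n δ A ≤ ∑' i, ENNReal.ofReal (radius (e i) ^ δ) :=
        iInf_le_of_le (center ∘ e) <| iInf_le_of_le (radius ∘ e) <|
          iInf_le_of_le (fun i => hradius (e i)) <| iInf_le_of_le hcover le_rfl
    _ = ∑' j, ENNReal.ofReal (radius j ^ δ) := e.tsum_eq fun j => ENNReal.ofReal (radius j ^ δ)
    _ = ∑' i, ENNReal.ofReal (r i ^ δ) + ∑' i, (ρ i : ℝ≥0∞) := by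
        rw [ENNReal.summable.tsum_sum (f := fun j => ENNReal.ofReal (radius j ^ δ))
          ENNReal.summable]
        simp [radius, Real.rpow_inv_rpow, hδ.ne']
    _ ≤ _ := by gcongr

theorem hc_ne_top_of_isBounded (hδ : 0 < δ) {A : Set (Euc n)} (hA : Bornology.IsBounded A) :
    hc n δ A ≠ ∞ := by
  obtain ⟨R, hR, hAR⟩ := hA.subset_ball_lt 0 0
  have hle : hc n δ A ≤ ENNReal.ofReal (R ^ δ) := by
    simpa using hc_le_tsum hδ (fun _ : Unit => 0) (fun _ => R) (fun _ => hR)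
      (hAR.trans_eq (iUnion_const _).symm)
  exact ne_top_of_le_ne_top ENNReal.ofReal_ne_top hle

theorem ennreal_mul_rpow_sub_one (b : ℝ≥0∞) {p : ℝ} (hp : 1 ≤ p) : b * b ^ (p - 1) = b ^ p := by
  nth_rw 1 [← ENNReal.rpow_one b]
  rw [← ENNReal.rpow_add_of_nonneg _ _ zero_le_one (sub_nonneg.2 hp), add_sub_cancel]

theorem tsum_rpow_le_rpow_tsum {ι : Type*} (a : ι → ℝ≥0∞) {p : ℝ} (hp : 1 ≤ p) :
    ∑' i, a i ^ p ≤ (∑' i, a i) ^ p := by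
  calc ∑' i, a i ^ p = ∑' i, a i * a i ^ (p - 1) := by simp only [ennreal_mul_rpow_sub_one _ hp]
    _ ≤ ∑' i, a i * (∑' j, a j) ^ (p - 1) := ENNReal.tsum_le_tsum fun i =>
        mul_le_mul_right (ENNReal.rpow_le_rpow (ENNReal.le_tsum i) (sub_nonneg.2 hp)) _
    _ = (∑' i, a i) ^ p := by rw [ENNReal.tsum_mul_right, ennreal_mul_rpow_sub_one _ hp]

theorem volume_le_mul_hc_rpow (hδ : 0 < δ) (hδn : δ ≤ n) (A : Set (Euc n)) :
    volume A ≤ volume (ball (0 : Euc n) 1) * hc n δ A ^ (n / δ : ℝ) := by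
  have hp : 1 ≤ n / δ := (one_le_div hδ).2 hδn
  have hp0 : 0 < n / δ := by linarith
  have hball0 : volume (ball (0 : Euc n) 1) ≠ 0 := (measure_ball_pos _ _ one_pos).ne'
  have hball : volume (ball (0 : Euc n) 1) ≠ ∞ := measure_ball_lt_top.ne
  rw [mul_comm, ← ENNReal.div_le_iff hball0 hball, ← ENNReal.rpow_inv_le_iff hp0]
  refine le_iInf fun c => le_iInf fun r => le_iInf fun hr => le_iInf fun hA => ?_
  rw [ENNReal.rpow_inv_le_iff hp0, ENNReal.div_le_iff hball0 hball]
  calc volume A ≤ ∑' i, volume (ball (c i) (r i)) :=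
        (measure_mono hA).trans (measure_iUnion_le _)
    _ = (∑' i, ENNReal.ofReal (r i ^ δ) ^ (n / δ)) * volume (ball (0 : Euc n) 1) := by
        rw [← ENNReal.tsum_mul_right]
        refine tsum_congr fun i => ?_
        rw [Measure.addHaar_ball_of_pos _ _ (hr i), finrank_euclideanSpace_fin,
          ENNReal.ofReal_rpow_of_pos (Real.rpow_pos_of_pos (hr i) _), ← Real.rpow_mul (hr i).le,
          mul_div_cancel₀ _ hδ.ne', Real.rpow_natCast]
    _ ≤ _ := mul_le_mul_left (tsum_rpow_le_rpow_tsum _ hp) _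

theorem antitone_hc_setOf_ofReal_lt (Ω : Set (Euc n)) (f : Euc n → ℝ≥0∞) :
    Antitone fun t : ℝ => hc n δ {x | x ∈ Ω ∧ ENNReal.ofReal t < f x} :=
  fun _ _ hst => hc_mono fun _ hx => ⟨hx.1, (ENNReal.ofReal_le_ofReal hst).trans_lt hx.2⟩

theorem mul_hc_le_choquet (Ω : Set (Euc n)) (f : Euc n → ℝ≥0∞) (t : ℝ) :
    ENNReal.ofReal t * hc n δ {x | x ∈ Ω ∧ ENNReal.ofReal t < f x} ≤ choquet n δ Ω f := by
  set G := fun t : ℝ => hc n δ {x | x ∈ Ω ∧ ENNReal.ofReal t < f x}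
  calc ENNReal.ofReal t * G t = ∫⁻ _ in Ioc (0 : ℝ) t, G t := by simp [mul_comm]
    _ ≤ ∫⁻ s in Ioc (0 : ℝ) t, G s := setLIntegral_mono' measurableSet_Ioc fun s hs =>
        antitone_hc_setOf_ofReal_lt Ω f hs.2
    _ ≤ choquet n δ Ω f := lintegral_mono_set Ioc_subset_Ioi_self

theorem setLIntegral_rpow_le_choquet_rpow {p : ℝ} (hp : 1 ≤ p) {μ : Measure (Euc n)} {C : ℝ≥0∞}
    (hμ : ∀ A, μ A ≤ C * hc n δ A ^ p) (Ω : Set (Euc n)) {g : Euc n → ℝ} (hg : Measurable g)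
    (hg0 : ∀ y, 0 ≤ g y) :
    ∫⁻ y in Ω, ENNReal.ofReal (g y ^ p) ∂μ ≤
      ENNReal.ofReal p * C * choquet n δ Ω (fun y => ENNReal.ofReal (g y)) ^ p := by
  set I := choquet n δ Ω fun y => ENNReal.ofReal (g y)
  set G := fun t : ℝ => hc n δ {x | x ∈ Ω ∧ ENNReal.ofReal t < ENNReal.ofReal (g x)}
  have hp0 : 0 ≤ p - 1 := sub_nonneg.2 hp
  have hsuper (t : ℝ) (ht : 0 < t) : μ.restrict Ω {y | t < g y} ≤ C * G t ^ p := by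
    rw [Measure.restrict_apply (measurableSet_lt measurable_const hg)]
    refine (measure_mono ?_).trans (hμ _)
    exact fun y hy => ⟨hy.2, (ENNReal.ofReal_lt_ofReal_iff (ht.trans hy.1)).2 hy.1⟩
  have hlevel (t : ℝ) (ht : 0 < t) :
      μ.restrict Ω {y | t < g y} * ENNReal.ofReal (t ^ (p - 1)) ≤ C * I ^ (p - 1) * G t := by
    calc μ.restrict Ω {y | t < g y} * ENNReal.ofReal (t ^ (p - 1))
        ≤ C * G t ^ p * ENNReal.ofReal (t ^ (p - 1)) := mul_le_mul_left (hsuper t ht) _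
      _ = C * (ENNReal.ofReal t * G t) ^ (p - 1) * G t := by
          rw [ENNReal.mul_rpow_of_nonneg _ _ hp0, ENNReal.ofReal_rpow_of_pos ht,
            ← ennreal_mul_rpow_sub_one _ hp]
          ring
      _ ≤ C * I ^ (p - 1) * G t := by
          gcongr
          exact mul_hc_le_choquet Ω _ t
  rw [lintegral_rpow_eq_lintegral_meas_lt_mul _ (.of_forall hg0) hg.aemeasurable (by linarith),
    mul_assoc]
  refine mul_le_mul_right ?_ _
  calc ∫⁻ t in Ioi (0 : ℝ), μ.restrict Ω {y | t < g y} * ENNReal.ofReal (t ^ (p - 1))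
      ≤ ∫⁻ t in Ioi (0 : ℝ), C * I ^ (p - 1) * G t := setLIntegral_mono' measurableSet_Ioi hlevel
    _ = C * I ^ (p - 1) * I :=
        lintegral_const_mul _ (antitone_hc_setOf_ofReal_lt Ω _).measurable
    _ = C * I ^ p := by
        rw [← ennreal_mul_rpow_sub_one I hp]
        ring

theorem lintegral_enorm_rpow_le_choquet_rpow {F : Type*} [NormedAddCommGroup F] (hδ : 0 < δ)
    (hδn : δ ≤ n) {Ω : Set (Euc n)} {w : Euc n → F} (hw : Measurable fun y => ‖w y‖)
    (hsupp : Function.support w ⊆ Ω) :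
    ∫⁻ y, ‖w y‖ₑ ^ (n : ℝ) ≤ ENNReal.ofReal (n / δ) * volume (ball (0 : Euc n) 1) *
      choquet n δ Ω (fun y => ENNReal.ofReal (‖w y‖ ^ δ)) ^ (n / δ : ℝ) := by
  have hn : (0 : ℝ) < n := hδ.trans_le hδn
  calc ∫⁻ y, ‖w y‖ₑ ^ (n : ℝ) = ∫⁻ y in Ω, ‖w y‖ₑ ^ (n : ℝ) :=
        (setLIntegral_eq_of_support_subset fun y hy => hsupp fun hwy => hy <| by
          simp only [hwy, enorm_zero, ENNReal.zero_rpow_of_pos hn]).symm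
    _ = ∫⁻ y in Ω, ENNReal.ofReal ((‖w y‖ ^ δ) ^ (n / δ)) := by
        refine lintegral_congr fun y => ?_
        rw [← Real.rpow_mul (norm_nonneg _), mul_div_cancel₀ _ hδ.ne', ← ofReal_norm,
          ENNReal.ofReal_rpow_of_nonneg (norm_nonneg _) hn.le]
    _ ≤ _ := setLIntegral_rpow_le_choquet_rpow ((one_le_div hδ).2 hδn)
        (volume_le_mul_hc_rpow hδ hδn) Ω (hw.pow_const δ) fun y => by positivity

theorem exists_pairwiseDisjoint_closedBall_hc_le_tsum (hδ : 0 < δ) {B : Set (Euc n)}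
    {s : Euc n → ℝ} {r : ℝ} (hs0 : ∀ x ∈ B, 0 < s x) (hsr : ∀ x ∈ B, s x ≤ r) :
    ∃ I ⊆ B, I.Countable ∧ I.PairwiseDisjoint (fun x => closedBall x (s x)) ∧
      hc n δ B ≤ ∑' x : I, ENNReal.ofReal ((6 * s x) ^ δ) := by
  obtain ⟨I, hIB, hdisj, hcov⟩ := Vitali.exists_disjoint_subfamily_covering_enlargement_closedBall
    B id s r hsr 5 (by norm_num)
  have hcount : I.Countable := hdisj.countable_of_nonempty_interior fun x hx =>
    ⟨x, ball_subset_interior_closedBall (mem_ball_self (hs0 x (hIB hx)))⟩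
  have := hcount.to_subtype
  have hpos (x : I) : 0 < s x := hs0 x (hIB x.2)
  have hcover : B ⊆ ⋃ x : I, ball (x : Euc n) (6 * s x) := by
    intro x hx
    obtain ⟨b, hb, hsub⟩ := hcov x hx
    exact mem_iUnion.2 ⟨⟨b, hb⟩, closedBall_subset_ball (by linarith [hpos ⟨b, hb⟩])
      (hsub (mem_closedBall_self (hs0 x hx).le))⟩
  exact ⟨I, hIB, hcount, hdisj, hc_le_tsum hδ (fun x : I => (x : Euc n)) _
    (fun x => by linarith [hpos x]) hcover⟩

theorem hc_setOf_concentrated_le (hδ : 0 < δ) (ν : Measure (Euc n)) [IsFiniteMeasure ν] {r : ℝ}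
    (hr : 0 < r) :
    hc n δ {x | ∃ s, 0 < s ∧ s ≤ r ∧
        ENNReal.ofReal (s / r) ^ δ * ν univ < ν (closedBall x s)} ≤
      ENNReal.ofReal ((6 * r) ^ δ) := by
  set B := {x | ∃ s, 0 < s ∧ s ≤ r ∧ ENNReal.ofReal (s / r) ^ δ * ν univ < ν (closedBall x s)}
  choose! s hs0 hsr hs using show ∀ x ∈ B, ∃ s, 0 < s ∧ s ≤ r ∧
    ENNReal.ofReal (s / r) ^ δ * ν univ < ν (closedBall x s) from fun _ hx => hx
  obtain ⟨I, hIB, hcount, hdisj, hle⟩ := exists_pairwiseDisjoint_closedBall_hc_le_tsum hδ hs0 hsr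
  have hweight (x : I) : ENNReal.ofReal ((6 * s x) ^ δ) ≤
      ENNReal.ofReal ((6 * r) ^ δ) * (ν (closedBall x (s x)) / ν univ) := by
    have hpos : 0 < s x := hs0 x (hIB x.2)
    have hx := hs x (hIB x.2)
    rw [show 6 * s x = 6 * r * (s x / r) by field_simp,
      Real.mul_rpow (by positivity) (div_nonneg hpos.le hr.le),
      ENNReal.ofReal_mul (by positivity), ← ENNReal.ofReal_rpow_of_pos (div_pos hpos hr)]
    exact mul_le_mul_right ((ENNReal.le_div_iff_mul_le (.inr (bot_le.trans_lt hx).ne')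
      (.inl (measure_ne_top ν univ))).2 hx.le) _
  calc hc n δ B ≤ ∑' x : I, ENNReal.ofReal ((6 * s x) ^ δ) := hle
    _ ≤ ∑' x : I, ENNReal.ofReal ((6 * r) ^ δ) * (ν (closedBall x (s x)) / ν univ) :=
        ENNReal.tsum_le_tsum hweight
    _ = ENNReal.ofReal ((6 * r) ^ δ) * (ν (⋃ x ∈ I, closedBall x (s x)) / ν univ) := by
        simp only [ENNReal.tsum_mul_left, div_eq_mul_inv, ENNReal.tsum_mul_right]
        rw [measure_biUnion hcount hdisj fun x _ => isClosed_closedBall.measurableSet]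
    _ ≤ ENNReal.ofReal ((6 * r) ^ δ) := mul_le_of_le_one_right' <|
        (ENNReal.div_le_div_right (measure_mono (subset_univ _)) _).trans ENNReal.div_self_le_one

theorem lintegral_Ioi_exp_rpow_neg_div {a b : ℝ} (ha : 0 < a) (hab : a < b) (s : ℝ) :
    ∫⁻ t in Ioi (Real.exp (a * s)), ENNReal.ofReal (t ^ (-(b / a))) =
      ENNReal.ofReal (a / (b - a) * Real.exp ((a - b) * s)) := by
  have hT : 0 < Real.exp (a * s) := Real.exp_pos _
  have hexponent : -(b / a) < -1 := neg_lt_neg ((one_lt_div ha).2 hab)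
  have hba : b - a ≠ 0 := (sub_pos.2 hab).ne'
  have hba' : -b + a ≠ 0 := by contrapose! hba; linarith
  rw [← ofReal_integral_eq_lintegral_ofReal (integrableOn_Ioi_rpow_of_lt hexponent hT)
    ((ae_restrict_mem measurableSet_Ioi).mono fun t ht => Real.rpow_nonneg (hT.trans ht).le _),
    integral_Ioi_rpow_of_lt hexponent hT, ← Real.exp_mul]
  congr 1
  rw [show a * s * (-(b / a) + 1) = (a - b) * s by field_simp; ring]
  field_simp
  ring

theorem choquet_exp_mul_le {a b s₀ : ℝ} (ha : 0 < a) (hab : a < b) {A : ℝ≥0∞} {Ω : Set (Euc n)}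
    {v : Euc n → ℝ}
    (hv : ∀ s, s₀ ≤ s → hc n δ {x | x ∈ Ω ∧ s < v x} ≤ A * ENNReal.ofReal (Real.exp (-(b * s)))) :
    choquet n δ Ω (fun x => ENNReal.ofReal (Real.exp (a * v x))) ≤
      hc n δ Ω * ENNReal.ofReal (Real.exp (a * s₀)) +
        A * ENNReal.ofReal (a / (b - a) * Real.exp ((a - b) * s₀)) := by
  set T := Real.exp (a * s₀)
  have hT : 0 < T := Real.exp_pos _
  set G := fun t : ℝ =>
    hc n δ {x | x ∈ Ω ∧ ENNReal.ofReal t < ENNReal.ofReal (Real.exp (a * v x))}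
  have hG (t : ℝ) (ht : T < t) : G t ≤ A * ENNReal.ofReal (t ^ (-(b / a))) := by
    have ht0 : 0 < t := hT.trans ht
    have hs₀ : s₀ ≤ Real.log t / a :=
      (le_div_iff₀' ha).2 ((Real.lt_log_iff_exp_lt ht0).2 ht).le
    have hpow : t ^ (-(b / a)) = Real.exp (-(b * (Real.log t / a))) := by
      rw [Real.rpow_def_of_pos ht0]
      ring_nf
    rw [hpow]
    refine le_trans (hc_mono ?_) (hv _ hs₀)
    intro x hx
    refine ⟨hx.1, ?_⟩
    rw [div_lt_iff₀' ha, Real.log_lt_iff_lt_exp ht0]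
    exact (ENNReal.ofReal_lt_ofReal_iff (Real.exp_pos _)).1 hx.2
  calc choquet n δ Ω _ = ∫⁻ t in Ioc 0 T ∪ Ioi T, G t := by
        rw [Ioc_union_Ioi_eq_Ioi hT.le]
        rfl
    _ ≤ (∫⁻ t in Ioc 0 T, G t) + ∫⁻ t in Ioi T, G t := lintegral_union_le _ _ _
    _ ≤ (∫⁻ _ in Ioc 0 T, hc n δ Ω) + ∫⁻ t in Ioi T, A * ENNReal.ofReal (t ^ (-(b / a))) :=
        add_le_add (lintegral_mono fun t => hc_mono fun x hx => hx.1)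
          (setLIntegral_mono' measurableSet_Ioi hG)
    _ = _ := by
        rw [lintegral_const_mul _ (by fun_prop), lintegral_Ioi_exp_rpow_neg_div ha hab]
        simp [T]

end HausdorffContent

section LevelSets

variable {F : Type*} [NormedAddCommGroup F] [NormedSpace ℝ F]

theorem lintegral_enorm_fderiv_rpow_ne_top {E : Type*} [NormedAddCommGroup E] [NormedSpace ℝ E]
    [MeasurableSpace E] [OpensMeasurableSpace E] {μ : Measure E} [IsFiniteMeasureOnCompacts μ]
    {u : E → F} (hu : ContDiff ℝ 1 u) (hsupp : HasCompactSupport u) {p : ℝ} (hp : 0 < p) :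
    ∫⁻ y, ‖fderiv ℝ u y‖ₑ ^ p ∂μ ≠ ∞ := by
  have hmem : MemLp (fderiv ℝ u) (ENNReal.ofReal p) μ :=
    (hu.continuous_fderiv one_ne_zero).memLp_of_hasCompactSupport (hsupp.fderiv ℝ)
  have hlt := lintegral_rpow_enorm_lt_top_of_eLpNorm_lt_top (by simpa using hp)
    ENNReal.ofReal_ne_top hmem.2
  rw [ENNReal.toReal_ofReal hp.le] at hlt
  exact hlt.ne

variable {n : ℕ} {δ : ℝ} {u : Euc n → F}

theorem hc_setOf_lt_enorm_le (hn : 2 ≤ n) (hδ : 0 < δ) (hu : ContDiff ℝ 1 u)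
    (hsupp : HasCompactSupport u) {D L : ℝ} (hD : 0 < D) (hdiam : diam (tsupport u) ≤ D)
    (hL : 1 ≤ L) :
    hc n δ {x | rieszConst (volume : Measure (Euc n)) δ *
        (∫⁻ y, ‖fderiv ℝ u y‖ₑ ^ (n : ℝ)) ^ (1 / n : ℝ) *
          ENNReal.ofReal L ^ ((n - 1) / n : ℝ) <
            ‖u x‖ₑ * (volume : Measure (Euc n)).toSphere univ} ≤
      ENNReal.ofReal ((6 * (D * Real.exp (-L))) ^ δ) := by
  have hdim : Module.finrank ℝ (Euc n) = n := finrank_euclideanSpace_fin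
  have : Nonempty (Fin n) := ⟨⟨0, by omega⟩⟩
  have hcont : Continuous (fderiv ℝ u) := hu.continuous_fderiv one_ne_zero
  set f := fun y => ‖fderiv ℝ u y‖ₑ
  have hf : Measurable f := hcont.enorm.measurable
  set ν := (volume : Measure (Euc n)).withDensity fun y => f y ^ (n : ℝ)
  have : IsFiniteMeasure ν := isFiniteMeasure_withDensity
    (lintegral_enorm_fderiv_rpow_ne_top hu hsupp (by positivity))
  set r := D * Real.exp (-L)
  have hr : 0 < r := by positivity
  have hrD : r * Real.exp L = D := by
    rw [mul_assoc, ← Real.exp_add, neg_add_cancel, Real.exp_zero, mul_one]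
  refine (hc_mono fun x hx => ?_).trans (hc_setOf_concentrated_le hδ ν hr)
  by_contra hspread
  simp only [mem_ofPred_eq, not_exists, not_and, not_lt] at hspread
  have hxu : x ∈ tsupport u := by
    refine subset_tsupport u fun hux => ?_
    simp [hux] at hx
  refine hx.not_ge ((enorm_mul_toSphere_univ_le_rieszPotential volume hu hsupp x).trans ?_)
  have hpot := rieszPotential_le_of_forall_setLIntegral_closedBall_le volume (by rw [hdim]; omega)
    hf (δ := δ) (x := x) hr hL ?_ ?_
  · rwa [hdim] at hpot
  · rw [hrD]
    intro y hy
    have hyu : y ∈ tsupport u := support_fderiv_subset ℝ fun h => hy (by simp [f, h, ← ofReal_norm])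
    exact (dist_le_diam_of_mem hsupp.isCompact.isBounded hyu hxu).trans hdiam
  · intro s hs hsr
    simpa [hdim, ν, withDensity_apply, isClosed_closedBall.measurableSet] using hspread s hs hsr

theorem hc_setOf_lt_norm_rpow_le (hn : 2 ≤ n) (hδ : 0 < δ) (hu : ContDiff ℝ 1 u)
    (hsupp : HasCompactSupport u) {D k s : ℝ} (hD : 0 < D) (hdiam : diam (tsupport u) ≤ D)
    (hk : 0 < k)
    (hgrad : rieszConst (volume : Measure (Euc n)) δ *
        (∫⁻ y, ‖fderiv ℝ u y‖ₑ ^ (n : ℝ)) ^ (1 / n : ℝ) ≤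
      ENNReal.ofReal k * (volume : Measure (Euc n)).toSphere univ)
    (hs : k ^ (n / (n - 1) : ℝ) ≤ s) :
    hc n δ {x | s < ‖u x‖ ^ (n / (n - 1) : ℝ)} ≤ ENNReal.ofReal ((6 * D) ^ δ) *
      ENNReal.ofReal (Real.exp (-(δ / k ^ (n / (n - 1) : ℝ) * s))) := by
  have hn' : (2 : ℝ) ≤ n := by exact_mod_cast hn
  have : Nonempty (Fin n) := ⟨⟨0, by omega⟩⟩
  set S := (volume : Measure (Euc n)).toSphere univ
  have hS0 : S ≠ 0 := Measure.measure_univ_ne_zero.2 (Measure.toSphere_ne_zero _)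
  set p : ℝ := n / (n - 1)
  have hp : 0 < p := div_pos (by linarith) (by linarith)
  have hpinv : ((n - 1) / n : ℝ) = p⁻¹ := (inv_div _ _).symm
  have hkp : 0 < k ^ p := by positivity
  set L := s / k ^ p
  have hL : 1 ≤ L := (one_le_div hkp).2 hs
  have hkL : k * L ^ p⁻¹ = s ^ p⁻¹ := by
    rw [Real.div_rpow (hkp.le.trans hs) hkp.le, Real.rpow_rpow_inv hk.le hp.ne',
      mul_div_cancel₀ _ hk.ne']
  have hdecay : (6 * (D * Real.exp (-L))) ^ δ = (6 * D) ^ δ * Real.exp (-(δ / k ^ p * s)) := by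
    rw [← mul_assoc, Real.mul_rpow (by positivity) (Real.exp_pos _).le, ← Real.exp_mul]
    congr 2
    ring
  rw [← ENNReal.ofReal_mul (by positivity), ← hdecay]
  refine (hc_mono fun x hx => ?_).trans (hc_setOf_lt_enorm_le hn hδ hu hsupp hD hdiam hL)
  have hux : s ^ p⁻¹ < ‖u x‖ :=
    (Real.rpow_inv_lt_iff_of_pos (hkp.le.trans hs) (norm_nonneg _) hp).2 hx
  calc _ ≤ ENNReal.ofReal k * S * ENNReal.ofReal L ^ ((n - 1) / n : ℝ) := mul_le_mul_left hgrad _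
    _ = ENNReal.ofReal (s ^ p⁻¹) * S := by
        rw [hpinv, ENNReal.ofReal_rpow_of_pos (by linarith), mul_right_comm,
          ← ENNReal.ofReal_mul hk.le, hkL]
    _ < ‖u x‖ₑ * S := by
        have hux0 : 0 < ‖u x‖ := (Real.rpow_nonneg (hkp.le.trans hs) _).trans_lt hux
        rw [← ofReal_norm]
        exact ENNReal.mul_lt_mul_left hS0 (measure_ne_top _ _)
          ((ENNReal.ofReal_lt_ofReal_iff hux0).2 hux)

theorem exists_forall_hc_setOf_lt_norm_rpow_le (hn : 2 ≤ n) {δ₁ δ₂ : ℝ} (h1 : 0 < δ₁)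
    (h2 : 0 < δ₂) (h2n : δ₂ ≤ n) {D : ℝ} (hD : 0 < D) :
    ∃ k : ℝ, 0 < k ∧ ∀ (Ω : Set (Euc n)) (u : Euc n → F), ContDiff ℝ 1 u → HasCompactSupport u →
      diam (tsupport u) ≤ D → tsupport u ⊆ Ω →
      choquet n δ₂ Ω (fun y => ENNReal.ofReal (‖fderiv ℝ u y‖ ^ δ₂)) ≤ 1 →
      ∀ s, k ≤ s → hc n δ₁ {x | s < ‖u x‖ ^ (n / (n - 1) : ℝ)} ≤
        ENNReal.ofReal ((6 * D) ^ δ₁) * ENNReal.ofReal (Real.exp (-(δ₁ / k * s))) := by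
  have : Nonempty (Fin n) := ⟨⟨0, by omega⟩⟩
  set S := (volume : Measure (Euc n)).toSphere univ
  have hS0 : S ≠ 0 := Measure.measure_univ_ne_zero.2 (Measure.toSphere_ne_zero _)
  set V := ENNReal.ofReal (n / δ₂) * volume (ball (0 : Euc n) 1)
  have hV : V ≠ ∞ := ENNReal.mul_ne_top ENNReal.ofReal_ne_top measure_ball_lt_top.ne
  set K := rieszConst (volume : Measure (Euc n)) δ₁ * V ^ (1 / n : ℝ)
  have hK : K / S ≠ ∞ := ENNReal.div_ne_top (ENNReal.mul_ne_top
    (rieszConst_ne_top volume (by rw [finrank_euclideanSpace_fin]; omega) h1)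
    (ENNReal.rpow_ne_top_of_nonneg (by positivity) hV)) hS0
  have hKk : K ≤ ENNReal.ofReal ((K / S).toReal + 1) * S := by
    rw [← ENNReal.div_le_iff hS0 (measure_ne_top _ _)]
    exact (ENNReal.le_ofReal_iff_toReal_le hK (by positivity)).2 (by linarith)
  refine ⟨((K / S).toReal + 1) ^ (n / (n - 1) : ℝ), by positivity,
    fun Ω u hu hsupp hdiam hsub hch s hs => ?_⟩
  have hcont : Continuous (fderiv ℝ u) := hu.continuous_fderiv one_ne_zero
  have hgrad : ∫⁻ y, ‖fderiv ℝ u y‖ₑ ^ (n : ℝ) ≤ V :=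
    (lintegral_enorm_rpow_le_choquet_rpow h2 h2n hcont.norm.measurable
      ((support_fderiv_subset ℝ).trans hsub)).trans
      (mul_le_of_le_one_right' (ENNReal.rpow_le_one hch (by positivity)))
  refine hc_setOf_lt_norm_rpow_le hn h1 hu hsupp hD hdiam (by positivity) (le_trans ?_ hKk) hs
  exact mul_le_mul_right (ENNReal.rpow_le_rpow hgrad (by positivity)) _

end LevelSets

theorem stmt_19_general {F : Type*} [NormedAddCommGroup F] [NormedSpace ℝ F] (n : ℕ) (hn : 2 ≤ n)
    (Ω : Set (EuclideanSpace ℝ (Fin n))) (hΩ : Bornology.IsBounded Ω) (δ₁ δ₂ : ℝ) (h1 : 0 < δ₁)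
    (h2 : 0 < δ₂) (h2n : δ₂ ≤ n) :
    ∃ a b : ℝ, 0 < a ∧ 0 < b ∧
      ∀ u : EuclideanSpace ℝ (Fin n) → F, ContDiff ℝ 1 u → HasCompactSupport u →
        tsupport u ⊆ Ω →
        choquet n δ₂ Ω (fun y => ENNReal.ofReal (‖fderiv ℝ u y‖ ^ δ₂)) ≤ 1 →
        choquet n δ₁ Ω (fun x => ENNReal.ofReal (Real.exp (a * ‖u x‖ ^ ((n : ℝ) / (n - 1 : ℝ))))) ≤
          ENNReal.ofReal b := by
  set D := diam Ω + 1
  have hD : 0 < D := by positivity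
  obtain ⟨k, hk, hlevel⟩ := exists_forall_hc_setOf_lt_norm_rpow_le (F := F) hn h1 h2 h2n hD
  set a := δ₁ / k / 2
  have ha : 0 < a := by positivity
  have hab : a < δ₁ / k := half_lt_self (by positivity)
  set B := hc n δ₁ Ω * ENNReal.ofReal (Real.exp (a * k)) + ENNReal.ofReal ((6 * D) ^ δ₁) *
    ENNReal.ofReal (a / (δ₁ / k - a) * Real.exp ((a - δ₁ / k) * k))
  have hB : B ≠ ∞ := ENNReal.add_ne_top.2
    ⟨ENNReal.mul_ne_top (hc_ne_top_of_isBounded h1 hΩ) ENNReal.ofReal_ne_top,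
      ENNReal.mul_ne_top ENNReal.ofReal_ne_top ENNReal.ofReal_ne_top⟩
  refine ⟨a, B.toReal + 1, ha, by positivity, fun u hu hsupp hsub hch => ?_⟩
  have hdiam : diam (tsupport u) ≤ D := (diam_mono hsub hΩ).trans (by simp [D])
  calc choquet n δ₁ Ω _ ≤ B := choquet_exp_mul_le ha hab fun s hs =>
        (hc_mono fun x hx => hx.2).trans (hlevel Ω u hu hsupp hdiam hsub hch s hs)
    _ ≤ ENNReal.ofReal (B.toReal + 1) :=
        (ENNReal.le_ofReal_iff_toReal_le hB (by positivity)).2 (by linarith)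

theorem stmt_19 (n : ℕ) (hn : 2 ≤ n) (Ω : Set (EuclideanSpace ℝ (Fin n)))
    (hΩo : IsOpen Ω) (hΩc : IsConnected Ω) (hΩb : Bornology.IsBounded Ω)
    (δ₁ δ₂ : ℝ) (h1 : 0 < δ₁) (h1n : δ₁ ≤ n) (h2 : 0 < δ₂) (h2n : δ₂ ≤ n) :
    ∃ a b : ℝ, 0 < a ∧ 0 < b ∧
      ∀ u : EuclideanSpace ℝ (Fin n) → ℝ, ContDiff ℝ 1 u → HasCompactSupport u →
        tsupport u ⊆ Ω →
        choquet n δ₂ Ω (fun y => ENNReal.ofReal (‖fderiv ℝ u y‖ ^ δ₂)) ≤ 1 →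
        choquet n δ₁ Ω (fun x => ENNReal.ofReal (Real.exp (a * |u x| ^ ((n : ℝ) / (n - 1 : ℝ))))) ≤
          ENNReal.ofReal b := by
  simpa only [Real.norm_eq_abs] using stmt_19_general (F := ℝ) n hn Ω hΩb δ₁ δ₂ h1 h2 h2n
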